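/- arXiv:2301.08777 — 8 statements merged into one kernel-verified Lean document; each statement's English description precedes it below -/
import Mathlib

section
/- Let G be a tournament of order at least 3. Then for every integer t ≥ 1, the iterated tournament ILTT^t(G) is strong if and only if G is strong. -/
open scoped Classical

noncomputable section

/-- A tournament: a finite directed graph where every pair of distinct nodes
is joined by exactly one arc. -/
structure Tournament where
  V : Type
  [fintypeV : Fintype V]
  [decEqV : DecidableEq V]
  arc : V → V → Prop
  irrefl : ∀ x, ¬ arc x x
  exactlyOne : ∀ x y, x ≠ y → (arc x y ↔ ¬ arc y x)

attribute [instance] Tournament.fintypeV Tournament.decEqV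

namespace Tournament

/-- The ILTT extension: vertices are `V ⊕ V` where `Sum.inl x` is the original
node `x` and `Sum.inr x` is its clone `x'`. -/
def ILTT (T : Tournament) : Tournament where
  V := T.V ⊕ T.V
  arc := fun u v =>
    match u, v with
    | Sum.inl x, Sum.inl y => T.arc x y
    | Sum.inl x, Sum.inr y => T.arc x y
    | Sum.inr x, Sum.inl y => T.arc x y ∨ x = y
    | Sum.inr x, Sum.inr y => T.arc x y
  irrefl := by rintro (x | x) h <;> exact T.irrefl x h
  exactlyOne := by
    rintro (x | x) (y | y) hxy
    · exact T.exactlyOne x y (fun h => hxy (by rw [h]))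
    · by_cases h : x = y
      · subst h; simp [T.irrefl x]
      · have := T.exactlyOne x y h
        simp only [not_or]
        constructor
        · intro ha; exact ⟨this.mp ha, fun h' => h h'.symm⟩
        · intro ha; exact this.mpr ha.1
    · by_cases h : x = y
      · subst h; simp [T.irrefl x]
      · have := T.exactlyOne x y h
        constructor
        · rintro (ha | ha)
          · exact this.mp ha
          · exact absurd ha h
        · intro ha; exact Or.inl (this.mpr ha)
    · exact T.exactlyOne x y (fun h => hxy (by rw [h]))

/-- The dual ILTT extension: identical to `ILTT` except the arcs between
clones are reversed. -/
def ILTTd (T : Tournament) : Tournament where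
  V := T.V ⊕ T.V
  arc := fun u v =>
    match u, v with
    | Sum.inl x, Sum.inl y => T.arc x y
    | Sum.inl x, Sum.inr y => T.arc x y
    | Sum.inr x, Sum.inl y => T.arc x y ∨ x = y
    | Sum.inr x, Sum.inr y => T.arc y x
  irrefl := by rintro (x | x) h <;> exact T.irrefl x h
  exactlyOne := by
    rintro (x | x) (y | y) hxy
    · exact T.exactlyOne x y (fun h => hxy (by rw [h]))
    · by_cases h : x = y
      · subst h; simp [T.irrefl x]
      · have := T.exactlyOne x y h
        simp only [not_or]
        constructor
        · intro ha; exact ⟨this.mp ha, fun h' => h h'.symm⟩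
        · intro ha; exact this.mpr ha.1
    · by_cases h : x = y
      · subst h; simp [T.irrefl x]
      · have := T.exactlyOne x y h
        constructor
        · rintro (ha | ha)
          · exact this.mp ha
          · exact absurd ha h
        · intro ha; exact Or.inl (this.mpr ha)
    · exact T.exactlyOne y x (fun h => hxy (by rw [h]))

/-- A tournament is strong if, for every ordered pair of nodes, there is a
directed path from the first to the second. -/
def Strong (T : Tournament) : Prop := ∀ u v : T.V, Relation.ReflTransGen T.arc u v

/-- `HasWalk T u v n` : there is a directed walk of length `n` from `u` to `v`. -/
def HasWalk (T : Tournament) (u v : T.V) (n : ℕ) : Prop :=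
  ∃ f : Fin (n + 1) → T.V, f 0 = u ∧ f (Fin.last n) = v ∧
    ∀ i : Fin n, T.arc (f i.castSucc) (f i.succ)

/-- The distance from `u` to `v`: the length of a shortest directed path. -/
def dist (T : Tournament) (u v : T.V) : ℕ := sInf {n | HasWalk T u v n}

/-- The diameter: the maximum distance over ordered pairs of distinct nodes. -/
def diam (T : Tournament) : ℕ :=
  (Finset.univ.filter (fun p : T.V × T.V => p.1 ≠ p.2)).sup
    (fun p => T.dist p.1 p.2)

/-- The Wiener index: the sum of distances over ordered pairs of distinct nodes. -/
def wiener (T : Tournament) : ℕ :=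
  ∑ p ∈ Finset.univ.filter (fun p : T.V × T.V => p.1 ≠ p.2), T.dist p.1 p.2

/-- The average distance `L(T) = W(T)/(m(m-1))` where `m` is the order. -/
def avgDist (T : Tournament) : ℝ :=
  (T.wiener : ℝ) / ((Fintype.card T.V : ℝ) * ((Fintype.card T.V : ℝ) - 1))

/-- `J` is a subtournament of `K`. -/
def IsSubtournament (J K : Tournament) : Prop :=
  ∃ f : J.V → K.V, Function.Injective f ∧ ∀ u v : J.V, J.arc u v ↔ K.arc (f u) (f v)

/-- The linear order on `t` nodes. -/
def linearTournament (t : ℕ) : Tournament where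
  V := Fin t
  arc := fun i j => i < j
  irrefl := fun i => lt_irrefl i
  exactlyOne := fun i j h => by
    rw [not_lt]
    exact ⟨le_of_lt, fun hle => hle.lt_of_ne h⟩

/-- A tournament is Hamiltonian if it has a directed cycle through all nodes. -/
def IsHamiltonian (T : Tournament) : Prop :=
  ∃ f : ZMod (Fintype.card T.V) ≃ T.V, ∀ i, T.arc (f i) (f (i + 1))

/-- `S` is an in-dominating set. -/
def InDom (T : Tournament) (S : Finset T.V) : Prop :=
  ∀ u, u ∉ S → ∃ v ∈ S, T.arc u v

/-- `S` is an out-dominating set. -/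
def OutDom (T : Tournament) (S : Finset T.V) : Prop :=
  ∀ u, u ∉ S → ∃ v ∈ S, T.arc v u

/-- The in-domination number. -/
def inDomNum (T : Tournament) : ℕ := sInf {n | ∃ S : Finset T.V, T.InDom S ∧ S.card = n}

/-- The out-domination number. -/
def outDomNum (T : Tournament) : ℕ := sInf {n | ∃ S : Finset T.V, T.OutDom S ∧ S.card = n}

end Tournament

namespace Tournament

theorem Strong.exists_arc {T : Tournament} [Nontrivial T.V] (h : T.Strong) (y : T.V) :
    ∃ z, T.arc z y := by
  obtain ⟨x, hx⟩ := exists_ne y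
  rcases Relation.ReflTransGen.cases_tail (h x y) with h | ⟨z, -, hz⟩
  · exact absurd h.symm hx
  · exact ⟨z, hz⟩

theorem Strong.of_ILTT {T : Tournament} (h : T.ILTT.Strong) : T.Strong := by
  intro u v
  refine Relation.ReflTransGen.lift' (Sum.elim id id : T.V ⊕ T.V → T.V) ?_ _ _
    (h (Sum.inl u) (Sum.inl v))
  rintro (x | x) (y | y) hxy
  · exact .single hxy
  · exact .single hxy
  · rcases hxy with hxy | rfl
    · exact .single hxy
    · exact .refl
  · exact .single hxy

theorem Strong.ILTT {T : Tournament} [Nontrivial T.V] (h : T.Strong) : T.ILTT.Strong := by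
  have inl_inl (x y : T.V) : Relation.ReflTransGen T.ILTT.arc (Sum.inl x) (Sum.inl y) :=
    Relation.ReflTransGen.lift (Sum.inl : T.V → T.V ⊕ T.V) (fun _ _ hab => hab) _ _ (h x y)
  have to_inl (u : T.V ⊕ T.V) (y : T.V) :
      Relation.ReflTransGen T.ILTT.arc u (Sum.inl y) := by
    rcases u with x | x
    · exact inl_inl x y
    · exact .head (b := Sum.inl x) (Or.inr rfl) (inl_inl x y)
  rintro u (y | y)
  · exact to_inl u y
  · obtain ⟨z, hz⟩ := h.exists_arc y
    exact .tail (b := Sum.inl z) (to_inl u z) hz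

theorem strong_ILTT_iff (T : Tournament) [Nontrivial T.V] : T.ILTT.Strong ↔ T.Strong :=
  ⟨Strong.of_ILTT, Strong.ILTT⟩

theorem nontrivial_iterate_ILTT (T : Tournament) [hT : Nontrivial T.V] (t : ℕ) :
    Nontrivial (Tournament.ILTT^[t] T).V := by
  induction t with
  | zero => exact hT
  | succ t ih =>
    rw [Function.iterate_succ_apply']
    exact (Sum.inl_injective (α := (Tournament.ILTT^[t] T).V)
      (β := (Tournament.ILTT^[t] T).V)).nontrivial

theorem strong_iterate_ILTT_iff (T : Tournament) [Nontrivial T.V] (t : ℕ) :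
    (Tournament.ILTT^[t] T).Strong ↔ T.Strong := by
  induction t with
  | zero => rfl
  | succ t ih =>
    have := T.nontrivial_iterate_ILTT t
    rw [Function.iterate_succ_apply', strong_ILTT_iff, ih]

end Tournament

open Tournament

/-- For a tournament `G` of order at least 3 and every `t ≥ 1`,
`ILTT^t(G)` is strong if and only if `G` is strong. -/
theorem stmt0 (G : Tournament) (hcard : 3 ≤ Fintype.card G.V) :
    ∀ t : ℕ, 1 ≤ t → ((Tournament.ILTT^[t] G).Strong ↔ G.Strong) := by
  have : Nontrivial G.V := Fintype.one_lt_card_iff_nontrivial.mp (by omega)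
  exact fun t _ => G.strong_iterate_ILTT_iff t
end
end

section
/- Let G be a strong tournament of order at least 3. Then for every node x of G, the distance in ILTT(G) from x to its clone x' equals 3 (in particular, there is no directed path of length at most 2 from x to x' in ILTT(G)). -/
open scoped Classical

noncomputable section

open Tournament

namespace Tournament

lemma not_arc_of_arc (T : Tournament) {x y : T.V} (h : T.arc x y) : ¬ T.arc y x := by
  have hne : x ≠ y := by
    rintro rfl
    exact T.irrefl _ h
  exact (T.exactlyOne x y hne).mp h

/-- A closed walk that starts with the arc `(x, a)` yields a directed triangle through `x`. -/
lemma exists_triangle_of_reflTransGen (T : Tournament) {x a : T.V}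
    (h : Relation.ReflTransGen T.arc a x) (hxa : T.arc x a) :
    ∃ b c, T.arc x b ∧ T.arc b c ∧ T.arc c x := by
  induction h using Relation.ReflTransGen.head_induction_on with
  | refl => exact absurd hxa (T.irrefl x)
  | @head a c hac _ ih =>
    by_cases hxc : T.arc x c
    · exact ih hxc
    · have hne : c ≠ x := by
        rintro rfl
        exact T.not_arc_of_arc hxa hac
      exact ⟨a, c, hxa, hac, (T.exactlyOne c x hne).mpr hxc⟩

lemma Strong.exists_triangle {T : Tournament} (hT : T.Strong) [Nontrivial T.V] (x : T.V) :
    ∃ b c, T.arc x b ∧ T.arc b c ∧ T.arc c x := by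
  obtain ⟨y, hy⟩ := exists_ne x
  obtain h | ⟨a, hxa, _⟩ := (hT x y).cases_head
  · exact absurd h.symm hy
  · exact T.exists_triangle_of_reflTransGen (hT a x) hxa

lemma not_hasWalk_clone_of_le_two (T : Tournament) (x : T.V) {n : ℕ} (hn : n ≤ 2) :
    ¬ T.ILTT.HasWalk (Sum.inl x) (Sum.inr x) n := by
  rintro ⟨f, h0, hl, hf⟩
  interval_cases n
  · exact Sum.inl_ne_inr (h0.symm.trans hl)
  · have h : T.ILTT.arc (f 0) (f (Fin.last 1)) := hf 0
    rw [h0, hl] at h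
    exact T.irrefl x h
  · have h₁ : T.ILTT.arc (f 0) (f 1) := hf 0
    have h₂ : T.ILTT.arc (f 1) (f (Fin.last 2)) := hf 1
    rw [h0] at h₁
    rw [hl] at h₂
    rcases hm : f 1 with m | m <;> rw [hm] at h₁ h₂ <;> exact T.not_arc_of_arc h₁ h₂

lemma hasWalk_clone_three (T : Tournament) {x b c : T.V} (hxb : T.arc x b) (hbc : T.arc b c)
    (hcx : T.arc c x) : T.ILTT.HasWalk (Sum.inl x) (Sum.inr x) 3 := by
  refine ⟨![Sum.inl x, Sum.inl b, Sum.inl c, Sum.inr x], rfl, rfl, fun i => ?_⟩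
  fin_cases i
  · exact hxb
  · exact hbc
  · exact hcx

end Tournament

/-- In a strong tournament `G` of order at least 3, the distance in
`ILTT(G)` from any node `x` to its clone `x'` equals 3; in particular there is no
directed path of length at most 2 from `x` to `x'`. -/
theorem stmt1 (G : Tournament) (hcard : 3 ≤ Fintype.card G.V) (hG : G.Strong)
    (x : G.V) :
    (G.ILTT).dist (Sum.inl x) (Sum.inr x) = 3 ∧
    ∀ n : ℕ, n ≤ 2 → ¬ (G.ILTT).HasWalk (Sum.inl x) (Sum.inr x) n := by
  have hlow : ∀ n : ℕ, n ≤ 2 → ¬ (G.ILTT).HasWalk (Sum.inl x) (Sum.inr x) n :=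
    fun n hn => G.not_hasWalk_clone_of_le_two x hn
  have : Nontrivial G.V := Fintype.one_lt_card_iff_nontrivial.mp (by omega)
  obtain ⟨b, c, hxb, hbc, hcx⟩ := hG.exists_triangle x
  have hwalk := G.hasWalk_clone_three hxb hbc hcx
  refine ⟨le_antisymm (Nat.sInf_le hwalk) (le_csInf ⟨3, hwalk⟩ fun n hn => ?_), hlow⟩
  by_contra hlt
  exact hlow n (by omega) hn
end
end

section
/- Let G be a tournament with no sink. Then for every integer t ≥ 1, the iterated dual tournament ILTT_d^t(G) is strong. -/
open scoped Classical

noncomputable section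

open Tournament

namespace Tournament

/-- The dual ILTT extension of a tournament without sinks has no sinks. -/
theorem ILTTd_no_sink {T : Tournament} (hT : ∀ x : T.V, ∃ y : T.V, T.arc x y) :
    ∀ x : T.ILTTd.V, ∃ y : T.ILTTd.V, T.ILTTd.arc x y := by
  rintro (x | x)
  · obtain ⟨y, hy⟩ := hT x
    exact ⟨Sum.inl y, hy⟩
  · exact ⟨Sum.inl x, Or.inr rfl⟩

theorem iterate_ILTTd_no_sink {T : Tournament} (hT : ∀ x : T.V, ∃ y : T.V, T.arc x y) (t : ℕ) :
    ∀ x : (ILTTd^[t] T).V, ∃ y, (ILTTd^[t] T).arc x y := by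
  induction t with
  | zero => exact hT
  | succ t ih =>
    rw [Function.iterate_succ_apply']
    exact ILTTd_no_sink ih

/-- The dual ILTT extension of a tournament without sinks is strong: along an arc `(x, y)` there is
the cycle `x → y' → x' → x`, so each node and its clone reach each other, and `y` reaches `x`
through `y'` and `x'`. -/
theorem strong_ILTTd {T : Tournament} (hT : ∀ x : T.V, ∃ y : T.V, T.arc x y) :
    T.ILTTd.Strong := by
  have to_orig (x : T.V) : Relation.ReflTransGen T.ILTTd.arc (Sum.inr x) (Sum.inl x) :=
    .single (Or.inr rfl)
  have to_clone (x : T.V) : Relation.ReflTransGen T.ILTTd.arc (Sum.inl x) (Sum.inr x) := by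
    obtain ⟨y, hy⟩ := hT x
    exact .head (b := (Sum.inr y : T.V ⊕ T.V)) hy (.single hy)
  have orig (x y : T.V) : Relation.ReflTransGen T.ILTTd.arc (Sum.inl x) (Sum.inl y) := by
    by_cases hxy : x = y
    · exact hxy ▸ .refl
    by_cases h : T.arc x y
    · exact .single h
    · have hyx : T.arc y x := (T.exactlyOne y x (Ne.symm hxy)).mpr h
      exact ((to_clone x).tail (c := (Sum.inr y : T.V ⊕ T.V)) hyx).trans (to_orig y)
  rintro (x | x) (y | y)
  · exact orig x y
  · exact (orig x y).trans (to_clone y)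
  · exact (to_orig x).trans (orig x y)
  · exact (to_orig x).trans ((orig x y).trans (to_clone y))

end Tournament

/-- If `G` has no sink, then `ILTT_d^t(G)` is strong for all `t ≥ 1`. -/
theorem stmt2 (G : Tournament) (hsink : ∀ x : G.V, ∃ y : G.V, G.arc x y) :
    ∀ t : ℕ, 1 ≤ t → (Tournament.ILTTd^[t] G).Strong := by
  intro t ht
  obtain ⟨t, rfl⟩ := Nat.exists_eq_add_of_le' ht
  rw [Function.iterate_succ_apply']
  exact strong_ILTTd (iterate_ILTTd_no_sink hsink t)
end
end

section
/- Let G be a strong tournament of order at least 3. Then for all distinct nodes x and y of G, and for every α ∈ {x, x'} and β ∈ {y, y'}, the distance in ILTT(G) from α to β equals the distance in G from x to y; that is, d_G(x,y) = d_{ILTT(G)}(x,y) = d_{ILTT(G)}(x,y') = d_{ILTT(G)}(x',y) = d_{ILTT(G)}(x',y'). -/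
open scoped Classical

noncomputable section

open Tournament

namespace Tournament

theorem hasWalk_zero_iff {T : Tournament} {u v : T.V} : T.HasWalk u v 0 ↔ u = v := by
  constructor
  · rintro ⟨f, rfl, rfl, -⟩
    rfl
  · rintro rfl
    exact ⟨fun _ => u, rfl, rfl, fun i => i.elim0⟩

theorem hasWalk_succ_iff {T : Tournament} {u v : T.V} {n : ℕ} :
    T.HasWalk u v (n + 1) ↔ ∃ w, T.arc u w ∧ T.HasWalk w v n := by
  constructor
  · rintro ⟨f, rfl, rfl, hf⟩
    exact ⟨f 1, hf 0, fun i => f i.succ, rfl, rfl, fun i => hf i.succ⟩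
  · rintro ⟨w, huw, f, rfl, rfl, hf⟩
    refine ⟨Fin.cons u f, rfl, rfl, fun i => ?_⟩
    cases i using Fin.cases with
    | zero => exact huw
    | succ i => exact hf i

/-- The projection of `ILTT(T)` onto `T` that sends a node and its clone to that node. -/
def proj (T : Tournament) : T.ILTT.V → T.V := Sum.elim id id

theorem ILTT_arc_of_arc_proj {T : Tournament} {u v : T.ILTT.V}
    (h : T.arc (T.proj u) (T.proj v)) : T.ILTT.arc u v := by
  rcases u with x | x <;> rcases v with y | y
  · exact h
  · exact h
  · exact Or.inl h
  · exact h

theorem arc_proj_or_proj_eq {T : Tournament} {u v : T.ILTT.V} (h : T.ILTT.arc u v) :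
    T.arc (T.proj u) (T.proj v) ∨ T.proj u = T.proj v := by
  rcases u with x | x <;> rcases v with y | y
  · exact Or.inl h
  · exact Or.inl h
  · exact h
  · exact Or.inl h

theorem HasWalk.exists_le_proj {T : Tournament} {u v : T.ILTT.V} {n : ℕ}
    (h : T.ILTT.HasWalk u v n) : ∃ m ≤ n, T.HasWalk (T.proj u) (T.proj v) m := by
  induction n generalizing u with
  | zero => exact ⟨0, le_rfl, hasWalk_zero_iff.2 (congrArg T.proj (hasWalk_zero_iff.1 h))⟩
  | succ n ih =>
    obtain ⟨w, huw, hw⟩ := hasWalk_succ_iff.1 h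
    obtain ⟨m, hm, hwalk⟩ := ih hw
    rcases arc_proj_or_proj_eq huw with harc | heq
    · exact ⟨m + 1, Nat.succ_le_succ hm, hasWalk_succ_iff.2 ⟨_, harc, hwalk⟩⟩
    · exact ⟨m, hm.trans n.le_succ, heq ▸ hwalk⟩

theorem HasWalk.lift_ILTT {T : Tournament} {u v : T.ILTT.V} {n : ℕ}
    (h : T.HasWalk (T.proj u) (T.proj v) (n + 1)) : T.ILTT.HasWalk u v (n + 1) := by
  induction n generalizing u with
  | zero =>
    obtain ⟨w, huw, hw⟩ := hasWalk_succ_iff.1 h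
    rw [hasWalk_zero_iff.1 hw] at huw
    exact hasWalk_succ_iff.2 ⟨v, ILTT_arc_of_arc_proj huw, hasWalk_zero_iff.2 rfl⟩
  | succ n ih =>
    obtain ⟨w, huw, hw⟩ := hasWalk_succ_iff.1 h
    exact hasWalk_succ_iff.2 ⟨Sum.inl w, ILTT_arc_of_arc_proj huw, ih hw⟩

theorem dist_proj_eq_dist_ILTT {T : Tournament} {u v : T.ILTT.V} (huv : T.proj u ≠ T.proj v) :
    T.dist (T.proj u) (T.proj v) = T.ILTT.dist u v := by
  have hsub : {n | T.HasWalk (T.proj u) (T.proj v) n} ⊆ {n | T.ILTT.HasWalk u v n} := by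
    rintro (_ | n) hn
    · exact absurd (hasWalk_zero_iff.1 hn) huv
    · exact HasWalk.lift_ILTT hn
  rcases Set.eq_empty_or_nonempty {n | T.ILTT.HasWalk u v n} with hempty | hne
  · rw [dist, dist, hempty, Set.subset_eq_empty hsub hempty]
  · obtain ⟨m, hm, hwalk⟩ := HasWalk.exists_le_proj (Nat.sInf_mem hne)
    exact le_antisymm ((Nat.sInf_le hwalk).trans hm) (Nat.sInf_le (hsub (Nat.sInf_mem ⟨m, hwalk⟩)))

end Tournament

/-- In a strong tournament `G` of order at least 3, for distinct
nodes `x, y` and any `α ∈ {x, x'}`, `β ∈ {y, y'}`, the distance in `ILTT(G)` from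
`α` to `β` equals the distance in `G` from `x` to `y`. -/
theorem stmt3 (G : Tournament) (hcard : 3 ≤ Fintype.card G.V) (hG : G.Strong) :
    ∀ x y : G.V, x ≠ y →
      G.dist x y = (G.ILTT).dist (Sum.inl x) (Sum.inl y) ∧
      G.dist x y = (G.ILTT).dist (Sum.inl x) (Sum.inr y) ∧
      G.dist x y = (G.ILTT).dist (Sum.inr x) (Sum.inl y) ∧
      G.dist x y = (G.ILTT).dist (Sum.inr x) (Sum.inr y) := by
  intro x y hxy
  exact ⟨dist_proj_eq_dist_ILTT (u := Sum.inl x) (v := Sum.inl y) hxy,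
    dist_proj_eq_dist_ILTT (u := Sum.inl x) (v := Sum.inr y) hxy,
    dist_proj_eq_dist_ILTT (u := Sum.inr x) (v := Sum.inl y) hxy,
    dist_proj_eq_dist_ILTT (u := Sum.inr x) (v := Sum.inr y) hxy⟩
end
end

section
/- Let G be a strong tournament of order at least 3. Then for every integer t ≥ 1, the diameter of ILTT_d^t(G) is at most diam(G). -/
open scoped Classical

noncomputable section

open Tournament

namespace Tournament

lemma HasWalk.refl (T : Tournament) (u : T.V) : T.HasWalk u u 0 :=
  ⟨fun _ => u, rfl, rfl, fun i => i.elim0⟩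

lemma HasWalk.cons {T : Tournament} {u v w : T.V} {n : ℕ} (huv : T.arc u v)
    (h : T.HasWalk v w n) : T.HasWalk u w (n + 1) := by
  obtain ⟨f, h0, hl, hf⟩ := h
  refine ⟨Fin.cons u f, rfl, ?_, ?_⟩
  · rw [← Fin.succ_last, Fin.cons_succ, hl]
  · intro i
    rw [Fin.cons_succ]
    refine Fin.cases ?_ (fun j => ?_) i
    · simpa [h0] using huv
    · rw [← Fin.succ_castSucc, Fin.cons_succ]
      exact hf j

lemma HasWalk.ne_zero {T : Tournament} {u v : T.V} {n : ℕ} (h : T.HasWalk u v n)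
    (huv : u ≠ v) : n ≠ 0 := by
  rintro rfl
  obtain ⟨f, h0, hl, -⟩ := h
  exact huv (h0.symm.trans hl)

lemma HasWalk.of_arc {T : Tournament} {u v : T.V} (h : T.arc u v) : T.HasWalk u v 1 :=
  (HasWalk.refl T v).cons h

lemma HasWalk.exists_cons {T : Tournament} {u v : T.V} {n : ℕ} (h : T.HasWalk u v (n + 1)) :
    ∃ w, T.arc u w ∧ T.HasWalk w v n := by
  obtain ⟨f, rfl, rfl, hf⟩ := h
  exact ⟨f 1, hf 0, fun i => f i.succ, rfl, rfl, fun i => hf i.succ⟩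

lemma HasWalk.exists_arc {T : Tournament} {u v : T.V} {n : ℕ} (h : T.HasWalk u v n)
    (huv : u ≠ v) : ∃ w, T.arc u w := by
  obtain ⟨m, rfl⟩ := Nat.exists_eq_succ_of_ne_zero (h.ne_zero huv)
  obtain ⟨w, hw, -⟩ := h.exists_cons
  exact ⟨w, hw⟩

lemma HasWalk.arc {T : Tournament} {u v : T.V} (h : T.HasWalk u v 1) : T.arc u v := by
  obtain ⟨f, rfl, rfl, hf⟩ := h
  exact hf 0

lemma Strong.exists_hasWalk {T : Tournament} (hT : T.Strong) (u v : T.V) :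
    ∃ n, T.HasWalk u v n := by
  induction hT u v using Relation.ReflTransGen.head_induction_on with
  | refl => exact ⟨0, HasWalk.refl T v⟩
  | head h _ ih =>
    obtain ⟨n, hn⟩ := ih
    exact ⟨n + 1, hn.cons h⟩

lemma Strong.hasWalk_dist {T : Tournament} (hT : T.Strong) (u v : T.V) :
    T.HasWalk u v (T.dist u v) :=
  Nat.sInf_mem (hT.exists_hasWalk u v)

lemma dist_le_diam {T : Tournament} {u v : T.V} (huv : u ≠ v) : T.dist u v ≤ T.diam :=
  Finset.le_sup (f := fun p : T.V × T.V => T.dist p.1 p.2) (b := (u, v)) (by simpa using huv)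

lemma Strong.two_le_diam {T : Tournament} [Nontrivial T.V] (hT : T.Strong) : 2 ≤ T.diam := by
  obtain ⟨u, v, huv⟩ := exists_pair_ne T.V
  obtain ⟨w, hw⟩ := (hT.hasWalk_dist u v).exists_arc huv
  have hne : w ≠ u := by
    rintro rfl
    exact T.irrefl _ hw
  refine le_trans ?_ (dist_le_diam hne)
  have h := hT.hasWalk_dist w u
  have h0 := h.ne_zero hne
  have h1 : T.dist w u ≠ 1 := fun h1 => by
    rw [h1] at h
    exact (T.exactlyOne w u hne).mp h.arc hw
  omega

/-- Any two distinct nodes are joined, in both directions, by walks of length at most `D`. -/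
def WalkBound (T : Tournament) (D : ℕ) : Prop :=
  ∀ u v : T.V, u ≠ v → ∃ n ≤ D, T.HasWalk u v n

lemma Strong.walkBound_diam {T : Tournament} (hT : T.Strong) : T.WalkBound T.diam :=
  fun u v huv => ⟨T.dist u v, dist_le_diam huv, hT.hasWalk_dist u v⟩

lemma WalkBound.diam_le {T : Tournament} {D : ℕ} (h : T.WalkBound D) : T.diam ≤ D := by
  refine Finset.sup_le fun p hp => ?_
  obtain ⟨n, hn, hw⟩ := h p.1 p.2 (Finset.mem_filter.mp hp).2
  exact (Nat.sInf_le hw).trans hn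

lemma HasWalk.inl_inl {T : Tournament} {u v : T.V} {n : ℕ} (h : T.HasWalk u v n) :
    T.ILTTd.HasWalk (Sum.inl u) (Sum.inl v) n := by
  obtain ⟨f, rfl, rfl, hf⟩ := h
  exact ⟨fun i => Sum.inl (f i), rfl, rfl, hf⟩

lemma HasWalk.inl_inr {T : Tournament} {u v : T.V} {n : ℕ} (h : T.HasWalk u v n)
    (huv : u ≠ v) : T.ILTTd.HasWalk (Sum.inl u) (Sum.inr v) n := by
  obtain ⟨m, rfl⟩ := Nat.exists_eq_succ_of_ne_zero (h.ne_zero huv)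
  clear huv
  induction m generalizing u with
  | zero => exact HasWalk.of_arc (T := T.ILTTd) h.arc
  | succ m ih =>
    obtain ⟨w, huw, hw⟩ := h.exists_cons
    exact HasWalk.cons (T := T.ILTTd) (v := Sum.inl w) huw (ih hw)

lemma HasWalk.inr_inl {T : Tournament} {u v : T.V} {n : ℕ} (h : T.HasWalk u v n)
    (huv : u ≠ v) : T.ILTTd.HasWalk (Sum.inr u) (Sum.inl v) n := by
  obtain ⟨m, rfl⟩ := Nat.exists_eq_succ_of_ne_zero (h.ne_zero huv)
  obtain ⟨w, huw, hw⟩ := h.exists_cons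
  exact HasWalk.cons (T := T.ILTTd) (v := Sum.inl w) (Or.inl huw) hw.inl_inl

lemma WalkBound.ilttd {T : Tournament} [Nontrivial T.V] {D : ℕ} (hD : 2 ≤ D)
    (h : T.WalkBound D) : T.ILTTd.WalkBound D := by
  rintro (x | x) (y | y) hxy
  · obtain ⟨n, hn, hw⟩ := h x y fun e => hxy (congrArg Sum.inl e)
    exact ⟨n, hn, hw.inl_inl⟩
  · by_cases e : x = y
    · subst e
      obtain ⟨z, hz⟩ := exists_ne x
      obtain ⟨n, -, hw⟩ := h x z hz.symm
      obtain ⟨w, hxw⟩ := hw.exists_arc hz.symm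
      exact ⟨2, hD, HasWalk.cons (T := T.ILTTd) (v := Sum.inr w) hxw (HasWalk.of_arc hxw)⟩
    · obtain ⟨n, hn, hw⟩ := h x y e
      exact ⟨n, hn, hw.inl_inr e⟩
  · by_cases e : x = y
    · exact ⟨1, by omega, HasWalk.of_arc (Or.inr e)⟩
    · obtain ⟨n, hn, hw⟩ := h x y e
      exact ⟨n, hn, hw.inr_inl e⟩
  · by_cases hyx : T.arc y x
    · exact ⟨1, by omega, HasWalk.of_arc hyx⟩
    · have hxy' := (T.exactlyOne x y fun e => hxy (congrArg Sum.inr e)).mpr hyx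
      exact ⟨2, hD, HasWalk.cons (T := T.ILTTd) (v := Sum.inl x) (Or.inr rfl)
        (HasWalk.of_arc hxy')⟩

lemma WalkBound.iterate_ilttd {T : Tournament} [Nontrivial T.V] {D : ℕ} (hD : 2 ≤ D)
    (h : T.WalkBound D) (t : ℕ) : (ILTTd^[t] T).WalkBound D := by
  suffices H : Nontrivial (ILTTd^[t] T).V ∧ (ILTTd^[t] T).WalkBound D from H.2
  induction t with
  | zero => exact ⟨‹_›, h⟩
  | succ t ih =>
    obtain ⟨_, hw⟩ := ih
    rw [Function.iterate_succ_apply']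
    exact ⟨Sum.inl_injective.nontrivial (β := (ILTTd^[t] T).V ⊕ (ILTTd^[t] T).V), hw.ilttd hD⟩

end Tournament

/-- For a strong tournament `G` of order at least 3 and `t ≥ 1`,
`diam(ILTT_d^t(G)) ≤ diam G`. -/
theorem stmt5 (G : Tournament) (hcard : 3 ≤ Fintype.card G.V) (hG : G.Strong) :
    ∀ t : ℕ, 1 ≤ t → (Tournament.ILTTd^[t] G).diam ≤ G.diam := by
  intro t _
  have : Nontrivial G.V := Fintype.one_lt_card_iff_nontrivial.mp (by omega)
  exact (hG.walkBound_diam.iterate_ilttd hG.two_le_diam t).diam_le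
end
end

section
/- Let K be a tournament and let H be a subtournament of K. If J is a tournament on the same node set as H obtained from H by reversing the orientation of exactly one arc, then J is isomorphic to a subtournament of ILTT_d(K). -/
open scoped Classical

noncomputable section

open Tournament

/-- `J` is obtained from `H` (a tournament on the same node set, identified via
the equivalence `e`) by reversing the orientation of exactly one arc: there is a
pair `u, v` with `(u,v)` an arc of `H` and `(v,u)` an arc of `J`, and all other
arcs agree. -/
def DiffersByOneArc (H J : Tournament) : Prop :=
  ∃ e : H.V ≃ J.V, ∃ u v : H.V, H.arc u v ∧ J.arc (e v) (e u) ∧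
    ∀ a b : H.V, ¬((a = u ∧ b = v) ∨ (a = v ∧ b = u)) →
      (H.arc a b ↔ J.arc (e a) (e b))

/-- If `H` is a subtournament of `K` and `J` is obtained from `H`
by reversing exactly one arc, then `J` is isomorphic to a subtournament of
`ILTT_d(K)`. -/
theorem stmt12 (K H J : Tournament) (hHK : H.IsSubtournament K)
    (hHJ : DiffersByOneArc H J) : J.IsSubtournament K.ILTTd := by
  obtain ⟨f, hf, hfarc⟩ := hHK
  obtain ⟨e, u, v, huv, hvu, hagree⟩ := hHJ
  have hne : u ≠ v := fun h => H.irrefl v (h ▸ huv)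
  have hnvu : ¬ H.arc v u := (H.exactlyOne u v hne).mp huv
  have hnuv : ¬ J.arc (e u) (e v) :=
    (J.exactlyOne (e v) (e u) fun h => hne (e.injective h).symm).mp hvu
  -- Replace exactly the two ends of the reversed arc by their clones.
  let g : H.V → K.V ⊕ K.V := fun a => if a = u ∨ a = v then Sum.inr (f a) else Sum.inl (f a)
  have hg : ∀ a, Sum.elim id id (g a) = f a := fun a => by
    by_cases h : a = u ∨ a = v <;> simp [g, h]
  have hginj : Function.Injective g := fun a b h => hf (by rw [← hg a, ← hg b, h])
  have hgarc : ∀ a b, J.arc (e a) (e b) ↔ K.ILTTd.arc (g a) (g b) := by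
    intro a b
    by_cases ha : a = u ∨ a = v
    · by_cases hb : b = u ∨ b = v
      · simp only [g, if_pos ha, if_pos hb, ILTTd, ← hfarc]
        rcases ha with rfl | rfl <;> rcases hb with rfl | rfl <;>
          simp [H.irrefl, J.irrefl, huv, hvu, hnuv, hnvu]
      · have hab : f a ≠ f b := fun h => hb (hf h ▸ ha)
        simp only [g, if_pos ha, if_neg hb, ILTTd, ← hfarc, hab, or_false]
        exact (hagree a b (by tauto)).symm
    · by_cases hb : b = u ∨ b = v
      · simp only [g, if_neg ha, if_pos hb, ILTTd, ← hfarc]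
        exact (hagree a b (by tauto)).symm
      · simp only [g, if_neg ha, if_neg hb, ILTTd, ← hfarc]
        exact (hagree a b (by tauto)).symm
  exact ⟨fun a => g (e.symm a), hginj.comp e.symm.injective, fun a b => by
    simpa using hgarc (e.symm a) (e.symm b)⟩
end
end

section
/- Let G be a nonempty tournament and let J be any tournament of order n ≥ 1. Then there exists an integer r with r ≤ n + C(n,2) (where C(n,2) = n(n−1)/2) such that J is isomorphic to a subtournament of ILTT_d^r(G). -/
open scoped Classical

noncomputable section

open Tournament

namespace Tournament

/-- The relation `R` is induced by the arcs of `K` along an injection into its nodes. -/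
def Realizes {α : Type} (R : α → α → Prop) (K : Tournament) : Prop :=
  ∃ f : α → K.V, Function.Injective f ∧ ∀ u v, R u v ↔ K.arc (f u) (f v)

/-- Replacing the nodes of `S` by their clones reverses exactly the arcs inside `S`. -/
theorem Realizes.reverse_on {α : Type} {R : α → α → Prop} {K : Tournament}
    (h : Realizes R K) (S : Set α) :
    Realizes (fun u v => if u ∈ S ∧ v ∈ S then R v u else R u v) K.ILTTd := by
  obtain ⟨f, hf, hR⟩ := h
  refine ⟨fun u => if u ∈ S then Sum.inr (f u) else Sum.inl (f u), fun u v huv => ?_,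
    fun u v => ?_⟩
  · by_cases hu : u ∈ S <;> by_cases hv : v ∈ S <;> simp only [hu, hv, ↓reduceIte] at huv
    · exact hf (Sum.inr_injective huv)
    · cases huv
    · cases huv
    · exact hf (Sum.inl_injective huv)
  · by_cases hu : u ∈ S <;> by_cases hv : v ∈ S <;> simp [hu, hv, ILTTd, hR]
    intro huv
    exact absurd (hf huv ▸ hu) hv

/-- The linear order on `k + 1` nodes appears after `k` extensions of a nonempty tournament. -/
theorem realizes_lt_iterate (G : Tournament) (x : G.V) (k : ℕ) :
    Realizes (fun i j : Fin (k + 1) => i < j) (ILTTd^[k] G) := by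
  induction k with
  | zero =>
    refine ⟨fun _ => x, fun i j _ => Fin.ext (by omega), fun i j => ?_⟩
    exact iff_of_false (by omega) (G.irrefl x)
  | succ k ih =>
    obtain ⟨f, hf, hR⟩ := ih
    rw [Function.iterate_succ_apply']
    refine ⟨Fin.cons (α := fun _ => (ILTTd^[k] G).V ⊕ (ILTTd^[k] G).V) (Sum.inr (f 0))
      fun i => Sum.inl (f i), ?_, fun i j => ?_⟩
    · exact Fin.cons_injective_iff.mpr ⟨fun ⟨_, h⟩ => (nomatch h), Sum.inl_injective.comp hf⟩
    · induction i using Fin.cases with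
      | zero =>
        induction j using Fin.cases with
        | zero => simp [ILTTd, irrefl]
        | succ j =>
          simp only [Fin.succ_pos, Fin.cons_zero, Fin.cons_succ, ILTTd, true_iff, ← hR]
          rcases eq_or_ne j 0 with rfl | hj
          · exact Or.inr rfl
          · exact Or.inl (Fin.pos_of_ne_zero hj)
      | succ i =>
        induction j using Fin.cases with
        | zero => simp [ILTTd, ← hR]
        | succ j => simp [ILTTd, ← hR]

/-- One extension suffices for each pair on which a tournament relation deviates from a
realized linear order. -/
theorem Realizes.reverse_pairs {α : Type} [LinearOrder α] {K : Tournament}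
    (h : Realizes (fun u v : α => u < v) K) (D : Finset (Sym2 α)) (hD : ∀ e ∈ D, ¬ e.IsDiag) :
    Realizes (fun u v : α => Xor (u < v) (s(u, v) ∈ D)) (ILTTd^[D.card] K) := by
  induction D using Finset.induction_on with
  | empty => simpa [Xor] using h
  | insert e D he ih =>
    rw [Finset.card_insert_of_notMem he, Function.iterate_succ_apply']
    have hrev := (ih fun e' he' => hD e' (Finset.mem_insert_of_mem he')).reverse_on {u | u ∈ e}
    convert hrev using 3 with u v
    have hdiag := hD e (Finset.mem_insert_self e D)
    simp only [Set.mem_ofPred_eq, Finset.mem_insert]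
    rcases eq_or_ne u v with rfl | huv
    · have hne : s(u, u) ≠ e := fun h' => hdiag (h' ▸ rfl)
      simp [hne]
    · simp only [Sym2.mem_and_mem_iff huv, Sym2.eq_swap (a := v) (b := u), eq_comm (a := e)]
      split_ifs with heq
      · have hlt : v < u ↔ ¬ u < v := ⟨fun h' => h'.not_gt, fun h' =>
          lt_of_le_of_ne (not_lt.mp h') huv.symm⟩
        rw [heq]
        simp [he, Xor, hlt]
      · simp [heq]

end Tournament

/-- Universality of ILTT_d: for a nonempty tournament `G` and any
tournament `J` of order `n ≥ 1`, there is `r ≤ n + C(n,2)` such that `J` is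
isomorphic to a subtournament of `ILTT_d^r(G)`. -/
theorem stmt13 (G : Tournament) (hne : Nonempty G.V) (J : Tournament)
    (n : ℕ) (hn : Fintype.card J.V = n) (hn1 : 1 ≤ n) :
    ∃ r : ℕ, r ≤ n + Nat.choose n 2 ∧
      J.IsSubtournament (Tournament.ILTTd^[r] G) := by
  obtain ⟨k, rfl⟩ : ∃ k, n = k + 1 := ⟨n - 1, by omega⟩
  obtain ⟨x⟩ := hne
  let e : J.V ≃ Fin (k + 1) := Fintype.equivFinOfCardEq hn
  let W : SimpleGraph (Fin (k + 1)) := SimpleGraph.fromRel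
    fun i j => i < j ∧ J.arc (e.symm j) (e.symm i)
  have hW : W.edgeFinset.card ≤ (k + 1).choose 2 := by
    simpa using W.card_edgeFinset_le_card_choose_two
  have hreal := (realizes_lt_iterate G x k).reverse_pairs W.edgeFinset
    fun p hp => W.not_isDiag_of_mem_edgeSet (SimpleGraph.mem_edgeFinset.mp hp)
  rw [← Function.iterate_add_apply] at hreal
  obtain ⟨f, hf, hR⟩ := hreal
  refine ⟨W.edgeFinset.card + k, by omega, f ∘ e, hf.comp e.injective, fun u v => ?_⟩
  rw [Function.comp_apply, Function.comp_apply, ← hR]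
  rcases eq_or_ne u v with rfl | huv
  · simp [J.irrefl, Xor]
  · have huv' : e u ≠ e v := e.injective.ne huv
    have hJ := J.exactlyOne u v huv
    simp only [SimpleGraph.mem_edgeFinset, SimpleGraph.mem_edgeSet, W, SimpleGraph.fromRel_adj,
      Equiv.symm_apply_apply, Xor]
    rcases lt_or_gt_of_ne huv' with h | h
    · simp [h, h.not_gt, huv', hJ]
    · simp [h, h.not_gt, huv']
end
end

section
/- Let G be a Hamiltonian tournament of order at least 3. Then for every integer t ≥ 1, both ILTT^t(G) and ILTT_d^t(G) are Hamiltonian. -/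
open scoped Classical

noncomputable section

open Tournament

namespace Tournament

/-- A tournament is Hamiltonian as soon as its nodes are enumerated by a sequence of consecutive
arcs whose period is the order of the tournament. -/
theorem isHamiltonian_of_periodic (T : Tournament) [Nonempty T.V] (g : ℕ → T.V)
    (hper : Function.Periodic g (Fintype.card T.V)) (hsurj : Function.Surjective g)
    (harc : ∀ i, T.arc (g i) (g (i + 1))) : T.IsHamiltonian := by
  have : NeZero (Fintype.card T.V) := ⟨Fintype.card_ne_zero⟩
  have hcast : ∀ k : ℕ, g (k : ZMod (Fintype.card T.V)).val = g k := fun k => by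
    rw [ZMod.val_natCast, hper.map_mod_nat]
  have hbij : Function.Bijective fun z : ZMod (Fintype.card T.V) => g z.val := by
    rw [Fintype.bijective_iff_surjective_and_card]
    refine ⟨fun v => ?_, ZMod.card _⟩
    obtain ⟨k, rfl⟩ := hsurj v
    exact ⟨k, hcast k⟩
  refine ⟨Equiv.ofBijective _ hbij, fun i => ?_⟩
  have hsucc : g (i + 1).val = g (i.val + 1) := by
    rw [← hcast (i.val + 1), Nat.cast_add, ZMod.natCast_zmod_val, Nat.cast_one]
  simpa only [Equiv.ofBijective_apply, hsucc] using harc i.val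

/-- The sequence `x₀', x₀, x₁', x₁, …` running through the nodes `xᵢ = f i`, each preceded by its
clone. -/
def interleave {V : Type} {n : ℕ} (f : ZMod n → V) (k : ℕ) : V ⊕ V :=
  if k % 2 = 0 then Sum.inr (f (k / 2 : ℕ)) else Sum.inl (f (k / 2 : ℕ))

theorem interleave_even {V : Type} {n : ℕ} (f : ZMod n → V) (m : ℕ) :
    interleave f (2 * m) = Sum.inr (f m) := by
  simp [interleave]

theorem interleave_odd {V : Type} {n : ℕ} (f : ZMod n → V) (m : ℕ) :
    interleave f (2 * m + 1) = Sum.inl (f m) := by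
  have h : (2 * m + 1) / 2 = m := by omega
  simp [interleave, h, Nat.add_mod]

theorem interleave_periodic {V : Type} {n : ℕ} (f : ZMod n → V) :
    Function.Periodic (interleave f) (n + n) := by
  intro k
  obtain ⟨m, rfl | rfl⟩ := Nat.even_or_odd' k
  · rw [show 2 * m + (n + n) = 2 * (m + n) by ring]
    simp [interleave_even]
  · rw [show 2 * m + 1 + (n + n) = 2 * (m + n) + 1 by ring]
    simp [interleave_odd]

theorem interleave_surjective {V : Type} {n : ℕ} [NeZero n] {f : ZMod n → V}
    (hf : Function.Surjective f) : Function.Surjective (interleave f) := by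
  rintro (x | x) <;> obtain ⟨z, rfl⟩ := hf x
  · exact ⟨2 * z.val + 1, by simp [interleave_odd]⟩
  · exact ⟨2 * z.val, by simp [interleave_even]⟩

theorem interleave_arc {V : Type} {n : ℕ} {f : ZMod n → V} {r : V → V → Prop}
    {s : V ⊕ V → V ⊕ V → Prop} (hf : ∀ i, r (f i) (f (i + 1)))
    (hclone : ∀ x, s (Sum.inr x) (Sum.inl x))
    (harc : ∀ x y, r x y → s (Sum.inl x) (Sum.inr y)) (k : ℕ) :
    s (interleave f k) (interleave f (k + 1)) := by
  obtain ⟨m, rfl | rfl⟩ := Nat.even_or_odd' k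
  · rw [interleave_even, interleave_odd]
    exact hclone _
  · rw [interleave_odd, show 2 * m + 1 + 1 = 2 * (m + 1) by ring, interleave_even, Nat.cast_add,
      Nat.cast_one]
    exact harc _ _ (hf _)

instance (T : Tournament) [h : Nonempty T.V] : Nonempty T.ILTT.V := h.map Sum.inl

instance (T : Tournament) [h : Nonempty T.V] : Nonempty T.ILTTd.V := h.map Sum.inl

theorem card_ILTT (T : Tournament) :
    Fintype.card T.ILTT.V = Fintype.card T.V + Fintype.card T.V :=
  Fintype.card_sum

theorem card_ILTTd (T : Tournament) :
    Fintype.card T.ILTTd.V = Fintype.card T.V + Fintype.card T.V :=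
  Fintype.card_sum

theorem IsHamiltonian.ILTT {T : Tournament} [Nonempty T.V] (hT : T.IsHamiltonian) :
    T.ILTT.IsHamiltonian := by
  obtain ⟨f, hf⟩ := hT
  have : NeZero (Fintype.card T.V) := ⟨Fintype.card_ne_zero⟩
  refine isHamiltonian_of_periodic T.ILTT (interleave f) ?_ (interleave_surjective f.surjective)
    (interleave_arc (s := T.ILTT.arc) hf (fun _ => Or.inr rfl) fun _ _ h => h)
  rw [card_ILTT]
  exact interleave_periodic f

theorem IsHamiltonian.ILTTd {T : Tournament} [Nonempty T.V] (hT : T.IsHamiltonian) :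
    T.ILTTd.IsHamiltonian := by
  obtain ⟨f, hf⟩ := hT
  have : NeZero (Fintype.card T.V) := ⟨Fintype.card_ne_zero⟩
  refine isHamiltonian_of_periodic T.ILTTd (interleave f) ?_ (interleave_surjective f.surjective)
    (interleave_arc (s := T.ILTTd.arc) hf (fun _ => Or.inr rfl) fun _ _ h => h)
  rw [card_ILTTd]
  exact interleave_periodic f

/-- A construction that preserves nonempty Hamiltonian tournaments can be iterated. -/
theorem IsHamiltonian.iterate {T : Tournament} (F : Tournament → Tournament)
    (hF : ∀ S : Tournament, Nonempty S.V ∧ S.IsHamiltonian →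
      Nonempty (F S).V ∧ (F S).IsHamiltonian)
    (hne : Nonempty T.V) (hT : T.IsHamiltonian) (t : ℕ) : (F^[t] T).IsHamiltonian :=
  (Function.Iterate.rec (fun S : Tournament => Nonempty S.V ∧ S.IsHamiltonian)
    ⟨hne, hT⟩ hF t).2

end Tournament

/-- If `G` is a Hamiltonian tournament of order at least 3, then
for every `t ≥ 1` both `ILTT^t(G)` and `ILTT_d^t(G)` are Hamiltonian. -/
theorem stmt14 (G : Tournament) (hcard : 3 ≤ Fintype.card G.V)
    (hHam : G.IsHamiltonian) :
    ∀ t : ℕ, 1 ≤ t → (Tournament.ILTT^[t] G).IsHamiltonian ∧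
      (Tournament.ILTTd^[t] G).IsHamiltonian := by
  intro t _
  have hne : Nonempty G.V := Fintype.card_pos_iff.mp (by omega)
  exact ⟨hHam.iterate _ (fun _ ⟨_, hS⟩ => ⟨inferInstance, hS.ILTT⟩) hne t,
    hHam.iterate _ (fun _ ⟨_, hS⟩ => ⟨inferInstance, hS.ILTTd⟩) hne t⟩
end
end
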